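/- For any real ε > 0, there is a constant C = C(ε) such that for any integers n, s satisfying n ≥ C·s^2 and s ≥ C, there is a nonempty s-uniform hypergraph 𝒯 on n vertices satisfying: (1) the maximum degree of 𝒯 is at most C; (2) |e ∩ e'| < ε·s for all distinct edges e, e' of 𝒯; (3) for any set A ⊆ V(𝒯) with |A| ≥ ε·n, there are at most ε·e(𝒯) edges e of 𝒯 such that ||e ∩ A| − (|A|/n)·s| > ε·s, where e(𝒯) is the number of edges of 𝒯. -/

import Mathlib

attribute [local instance] Classical.propDecidable

/-!
Arrange `s * N` of the vertices, `N = ⌊n / s⌋`, in a grid with `s` columns of `N` points, and leave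
the fewer than `s` others isolated. In each of `d` rounds, independent random permutations of the
columns cut the grid into `N` disjoint transversals, which are the edges of that round. The
hypergraph is `s`-uniform and `d`-regular on the grid by construction.

Random permutations satisfy `P(σ v ∈ B for all v ∈ S) ≤ (|B| / N) ^ |S|`. Expanding `x ^ |e ∩ B|`
in powers of `x - 1 ≥ 0`, this bounds `𝔼 x ^ (∑ e ∈ F, |e ∩ B|)` by the Poisson value
`exp ((x - 1) * mean)` for every set `F` of edges and every set `B` of grid points. Taking `x = N`
with `B` an edge of another round makes overlaps of order `s` unlikely. Taking `x = exp (δ / 2)`,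
the excess over the mean reaches `δ * s * d * N` with probability at most
`exp (-(δ² / 4) * s * d * N)`, which beats the union bound over all `2 ^ ((d + s) * N)` pairs
`(F, B)` as soon as `d` and `s` are large. Applied to `B` and to its complement, with `F` the set of
edges that meet it too often, this bounds the number of atypical edges; the leftover vertices change
densities by at most `s / n`.
-/

open Finset
open scoped BigOperators

section FiniteProbability

theorem expect_prod_pi {ι : Type*} [Fintype ι] [DecidableEq ι] {X : ι → Type*}
    [∀ i, Fintype (X i)] (f : ∀ i, X i → ℝ) : 𝔼 w : ∀ i, X i, ∏ i, f i (w i) = ∏ i, 𝔼 x, f i x := by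
  simp_rw [Fintype.expect_eq_sum_div_card, prod_div_distrib, Fintype.prod_sum, Fintype.card_pi,
    Nat.cast_prod]

theorem expect_expect_update {ι : Type*} [Fintype ι] [DecidableEq ι] {X : ι → Type*}
    [∀ i, Fintype (X i)] (i : ι) (g : (∀ i, X i) → ℝ) :
    𝔼 w, 𝔼 x, g (Function.update w i x) = 𝔼 w, g w := by
  cases isEmpty_or_nonempty (X i) with
  | inl hX =>
    have : IsEmpty (∀ i, X i) := ⟨fun w => hX.false (w i)⟩
    simp only [univ_eq_empty, expect_empty]
  | inr hX =>
    calc 𝔼 w, 𝔼 x, g (Function.update w i x)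
        = 𝔼 p : (∀ i, X i) × X i, g (Function.update p.1 i p.2) := by
          rw [← univ_product_univ, expect_product]
      _ = 𝔼 p : (∀ i, X i) × X i, g p.1 := by
          -- Exchanging `x` with the old `i`-th coordinate is an involution.
          refine expect_nbij' (fun p => (Function.update p.1 i p.2, p.1 i))
            (fun p => (Function.update p.1 i p.2, p.1 i)) ?_ ?_ ?_ ?_ ?_ <;> simp
      _ = 𝔼 w, g w := by
          rw [← univ_product_univ, expect_product]
          simp only [Fintype.expect_const]

theorem dens_filter_eq_expect {Ω : Type*} [Fintype Ω] (p : Ω → Prop) [DecidablePred p] :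
    (dens {ω | p ω} : ℝ) = 𝔼 ω, if p ω then 1 else 0 := by
  rw [nnratCast_dens, Fintype.expect_eq_sum_div_card, sum_boole]

theorem dens_le_sum_expect {Q Ω : Type*} [Fintype Ω] {A : Finset Ω} {I : Finset Q} {W : Q → Ω → ℝ}
    (hW : ∀ q ω, 0 ≤ W q ω) (hA : ∀ ω ∈ A, ∃ q ∈ I, 1 ≤ W q ω) :
    (A.dens : ℝ) ≤ ∑ q ∈ I, 𝔼 ω, W q ω := by
  rw [← filter_univ_mem A, dens_filter_eq_expect, ← expect_sum_comm]
  refine expect_le_expect fun ω _ => ?_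
  split_ifs with hω
  · obtain ⟨q, hq, hqω⟩ := hA ω hω
    exact hqω.trans (single_le_sum (f := fun q => W q ω) (fun q _ => hW q ω) hq)
  · exact sum_nonneg fun q _ => hW q ω

theorem exists_and_of_dens_not_add_dens_not_lt_one {Ω : Type*} [Fintype Ω] [Nonempty Ω]
    {p q : Ω → Prop} [DecidablePred p] [DecidablePred q]
    (h : (dens {ω | ¬p ω} : ℝ) + dens {ω | ¬q ω} < 1) : ∃ ω, p ω ∧ q ω := by
  by_contra! hpq
  have cover : ({ω | ¬p ω} : Finset Ω) ∪ ({ω | ¬q ω} : Finset Ω) = univ := by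
    ext ω
    simpa [← not_and_or] using hpq ω
  have hle := dens_union_le ({ω | ¬p ω} : Finset Ω) {ω | ¬q ω}
  rw [cover, dens_univ] at hle
  exact h.not_ge (mod_cast hle)

end FiniteProbability

section RandomPermutation

variable {V : Type*} [Fintype V] [DecidableEq V]

theorem card_mul_card_perm_mapsTo_insert_le (B S : Finset V) {j : V} (hj : j ∉ S) :
    Fintype.card V * #{σ : Equiv.Perm V | ∀ v ∈ insert j S, σ v ∈ B}
      ≤ #B * #{σ : Equiv.Perm V | ∀ v ∈ S, σ v ∈ B} := by
  set G : Finset (Equiv.Perm V) := {σ | ∀ v ∈ S, σ v ∈ B} with hG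
  have card_preimage (σ : Equiv.Perm V) : #{v | σ v ∈ B} = #B :=
    card_equiv σ fun v => by simp
  have count_pairs : ∑ v, #{σ ∈ G | σ v ∈ B} = #B * #G := by
    calc ∑ v, #{σ ∈ G | σ v ∈ B} = ∑ σ ∈ G, #{v | σ v ∈ B} := by
          simp only [card_filter, sum_comm (s := univ)]
      _ = #B * #G := by simp only [card_preimage, sum_const, smul_eq_mul, mul_comm]
  rw [← count_pairs, ← card_univ, ← smul_eq_mul]
  refine card_nsmul_le_sum _ _ _ fun v _ => ?_
  by_cases hv : v ∈ S
  · refine card_le_card fun σ hσ => ?_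
    simp only [mem_filter, mem_univ, true_and, mem_insert, forall_eq_or_imp, hG] at hσ ⊢
    exact ⟨hσ.2, hσ.2 v hv⟩
  · -- Exchanging the values at `j` and `v` turns `σ v ∈ B` into `σ j ∈ B`; points of `S` are kept.
    refine card_le_card_of_injOn (fun σ => σ * Equiv.swap j v) (fun σ hσ => ?_)
      fun _ _ _ _ h => mul_right_cancel h
    simp only [mem_filter, mem_univ, true_and, mem_insert, forall_eq_or_imp, hG, mem_coe,
      Equiv.Perm.mul_apply, Equiv.swap_apply_right] at hσ ⊢
    refine ⟨fun u hu => ?_, hσ.1⟩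
    rw [Equiv.swap_apply_of_ne_of_ne (ne_of_mem_of_not_mem hu hj) (ne_of_mem_of_not_mem hu hv)]
    exact hσ.2 u hu

theorem dens_perm_mapsTo_le (B S : Finset V) :
    dens {σ : Equiv.Perm V | ∀ v ∈ S, σ v ∈ B} ≤ B.dens ^ #S := by
  induction S using Finset.induction_on with
  | empty => simp
  | insert j S hj ih =>
    have : Nonempty V := ⟨j⟩
    have step : dens {σ : Equiv.Perm V | ∀ v ∈ insert j S, σ v ∈ B}
        ≤ B.dens * dens {σ : Equiv.Perm V | ∀ v ∈ S, σ v ∈ B} := by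
      rw [dens_eq_card_div_card, dens_eq_card_div_card B, dens_eq_card_div_card, div_mul_div_comm,
        div_le_div_iff₀ (by positivity) (by positivity), ← mul_assoc]
      gcongr ?_ * _
      rw [mul_comm]
      exact mod_cast card_mul_card_perm_mapsTo_insert_le B S hj
    calc _ ≤ B.dens * B.dens ^ #S := step.trans (by gcongr)
      _ = _ := by rw [card_insert_of_notMem hj, pow_succ']

theorem expect_pow_card_perm_le (A B : Finset V) {x : ℝ} (hx : 1 ≤ x) :
    𝔼 σ : Equiv.Perm V, x ^ #{v ∈ A | σ v ∈ B} ≤ Real.exp ((x - 1) * (#A * B.dens)) := by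
  have expand (σ : Equiv.Perm V) : x ^ #{v ∈ A | σ v ∈ B}
      = ∑ S ∈ A.powerset, (x - 1) ^ #S * if ∀ v ∈ S, σ v ∈ B then 1 else 0 := by
    calc x ^ #{v ∈ A | σ v ∈ B} = ∏ v ∈ A, (1 + (x - 1) * if σ v ∈ B then 1 else 0) := by
          rw [← prod_const, prod_filter]
          exact prod_congr rfl fun v _ => by split_ifs <;> ring
      _ = _ := by
          simp only [prod_one_add, prod_mul_distrib, prod_const, prod_ite_zero, one_pow]
  calc 𝔼 σ : Equiv.Perm V, x ^ #{v ∈ A | σ v ∈ B}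
      = ∑ S ∈ A.powerset, (x - 1) ^ #S * (dens {σ : Equiv.Perm V | ∀ v ∈ S, σ v ∈ B} : ℝ) := by
        simp_rw [expand, expect_sum_comm, ← mul_expect, dens_filter_eq_expect]
    _ ≤ ∑ S ∈ A.powerset, (x - 1) ^ #S * (B.dens : ℝ) ^ #S := by
        gcongr with S
        exact mod_cast dens_perm_mapsTo_le B S
    _ = ∏ _v ∈ A, (1 + (x - 1) * (B.dens : ℝ)) := by
        simp only [prod_one_add, prod_const, mul_pow]
    _ ≤ Real.exp (∑ _v ∈ A, (x - 1) * (B.dens : ℝ)) :=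
        Real.prod_one_add_le_exp_sum _ fun _ => mul_nonneg (sub_nonneg.2 hx) (by positivity)
    _ = Real.exp ((x - 1) * (#A * B.dens)) := by
        rw [sum_const, nsmul_eq_mul, mul_left_comm]

end RandomPermutation

section RowEdge

variable {ρ ι V : Type*} [Fintype ι]

/-- The graph of `f`, viewed as a set of points of the grid `ι × V` that meets each column
`{i} × V` exactly once. -/
def transversal (f : ι → V) : Finset (ι × V) :=
  univ.map ⟨fun i => (i, f i), fun _ _ h => congrArg Prod.fst h⟩

@[simp]
theorem mem_transversal {f : ι → V} {w : ι × V} : w ∈ transversal f ↔ f w.1 = w.2 := by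
  refine mem_map.trans ⟨?_, fun h => ⟨w.1, mem_univ _, Prod.ext rfl h⟩⟩
  rintro ⟨i, -, rfl⟩
  rfl

@[simp]
theorem card_transversal (f : ι → V) : #(transversal f) = Fintype.card ι := card_map _

/-- The edges of the random hypergraph on the grid `ι × V`. In each round `r : ρ` the permutations
`π r i`, one for each column `i`, cut the grid into the transversals `rowEdge π (r, j)`,
where `j : V`. -/
def rowEdge (π : ρ → ι → Equiv.Perm V) (p : ρ × V) : Finset (ι × V) :=
  transversal fun i => π p.1 i p.2

theorem card_rowEdge (π : ρ → ι → Equiv.Perm V) (p : ρ × V) :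
    #(rowEdge π p) = Fintype.card ι := card_transversal _

theorem disjoint_rowEdge (π : ρ → ι → Equiv.Perm V) (r : ρ) {j j' : V} (hj : j ≠ j') :
    Disjoint (rowEdge π (r, j)) (rowEdge π (r, j')) := by
  rw [disjoint_left]
  intro w hw hw'
  rw [rowEdge, mem_transversal] at hw hw'
  exact hj ((π r w.1).injective (hw.trans hw'.symm))

variable [DecidableEq ι] [DecidableEq V]

theorem card_transversal_inter (f : ι → V) (B : Finset (ι × V)) :
    #(transversal f ∩ B) = #{i | (i, f i) ∈ B} := by
  rw [← filter_mem_eq_inter, transversal, filter_map, card_map]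
  rfl

theorem card_filter_mem_rowEdge [Fintype ρ] [Fintype V] (π : ρ → ι → Equiv.Perm V) (w : ι × V) :
    #{p | w ∈ rowEdge π p} = Fintype.card ρ := by
  rw [← card_univ]
  refine (card_nbij' (fun r => (r, (π r w.1).symm w.2)) Prod.fst ?_ ?_ ?_ ?_).symm
  · intro r _
    simp [rowEdge]
  · simp
  · exact fun _ _ => rfl
  · rintro ⟨r, j⟩ hp
    simpa [rowEdge, Equiv.symm_apply_eq, eq_comm (a := w.2)] using hp

variable [Fintype V]

theorem sum_dens_column (B : Finset (ι × V)) :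
    ∑ i, (dens {v | (i, v) ∈ B} : ℝ) = Fintype.card ι * B.dens := by
  have card_eq : ∑ i, #{v | (i, v) ∈ B} = #B := by
    rw [← card_sigma]
    exact card_equiv (Equiv.sigmaEquivProd ι V) (by simp)
  cases isEmpty_or_nonempty ι with
  | inl _ => simp
  | inr _ =>
    simp only [nnratCast_dens, ← sum_div, Fintype.card_prod, Nat.cast_mul]
    rw [← card_eq, Nat.cast_sum]
    field_simp

theorem expect_pow_sum_card_transversal_inter_le (F : Finset V) (B : Finset (ι × V)) {x : ℝ}
    (hx : 1 ≤ x) :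
    𝔼 σ : ι → Equiv.Perm V, x ^ ∑ j ∈ F, #(transversal (fun i => σ i j) ∩ B)
      ≤ Real.exp ((x - 1) * (#F * (Fintype.card ι * B.dens))) := by
  have sum_by_columns (σ : ι → Equiv.Perm V) : ∑ j ∈ F, #(transversal (fun i => σ i j) ∩ B)
      = ∑ i, #{j ∈ F | σ i j ∈ ({v | (i, v) ∈ B} : Finset V)} := by
    simp only [card_transversal_inter, card_filter, mem_filter_univ]
    exact sum_comm
  calc 𝔼 σ : ι → Equiv.Perm V, x ^ ∑ j ∈ F, #(transversal (fun i => σ i j) ∩ B)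
      = ∏ i, 𝔼 τ : Equiv.Perm V, x ^ #{j ∈ F | τ j ∈ ({v | (i, v) ∈ B} : Finset V)} := by
        simp_rw [sum_by_columns, ← prod_pow_eq_pow_sum]
        rw [← expect_prod_pi]
    _ ≤ ∏ i, Real.exp ((x - 1) * (#F * (dens {v | (i, v) ∈ B} : ℝ))) :=
        prod_le_prod (fun _ _ => expect_nonneg fun _ _ => by positivity)
          fun i _ => expect_pow_card_perm_le _ _ hx
    _ = _ := by rw [← Real.exp_sum, ← mul_sum, ← mul_sum, sum_dens_column]

variable [Fintype ρ] [DecidableEq ρ]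

theorem expect_pow_sum_card_rowEdge_inter_le (F : Finset (ρ × V)) (B : Finset (ι × V)) {x : ℝ}
    (hx : 1 ≤ x) :
    𝔼 π : ρ → ι → Equiv.Perm V, x ^ ∑ p ∈ F, #(rowEdge π p ∩ B)
      ≤ Real.exp ((x - 1) * (#F * (Fintype.card ι * B.dens))) := by
  have sum_by_rounds (g : ρ × V → ℕ) : ∑ p ∈ F, g p = ∑ r, ∑ j with (r, j) ∈ F, g (r, j) :=
    sum_finset_product F univ (fun r => {j | (r, j) ∈ F}) (by simp)
  have card_by_rounds : #F = ∑ r, #{j | (r, j) ∈ F} := by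
    simpa only [card_eq_sum_ones] using sum_by_rounds fun _ => 1
  calc 𝔼 π : ρ → ι → Equiv.Perm V, x ^ ∑ p ∈ F, #(rowEdge π p ∩ B)
      = ∏ r, 𝔼 σ : ι → Equiv.Perm V,
          x ^ ∑ j with (r, j) ∈ F, #(transversal (fun i => σ i j) ∩ B) := by
        simp_rw [sum_by_rounds, ← prod_pow_eq_pow_sum univ]
        rw [← expect_prod_pi]
        rfl
    _ ≤ ∏ r, Real.exp ((x - 1) * (#{j | (r, j) ∈ F} * (Fintype.card ι * B.dens))) :=
        prod_le_prod (fun _ _ => expect_nonneg fun _ _ => by positivity)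
          fun r _ => expect_pow_sum_card_transversal_inter_le _ B hx
    _ = _ := by
        rw [← Real.exp_sum, ← mul_sum, ← sum_mul, card_by_rounds, Nat.cast_sum]

theorem expect_pow_card_rowEdge_inter_rowEdge_le {p q : ρ × V} (hpq : p.1 ≠ q.1) {x : ℝ}
    (hx : 1 ≤ x) :
    𝔼 π : ρ → ι → Equiv.Perm V, x ^ #(rowEdge π p ∩ rowEdge π q)
      ≤ Real.exp ((x - 1) * (Fintype.card ι / Fintype.card V)) := by
  rw [← expect_expect_update p.1]
  refine expect_le univ_nonempty fun π _ => ?_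
  have fixed_edge (σ : ι → Equiv.Perm V) :
      rowEdge (Function.update π p.1 σ) q = rowEdge π q := by
    simp only [rowEdge, Function.update_of_ne hpq.symm]
  have resampled_edge (σ : ι → Equiv.Perm V) :
      rowEdge (Function.update π p.1 σ) p = transversal fun i => σ i p.2 := by
    simp only [rowEdge, Function.update_self]
  have mean_eq : (Fintype.card ι * (rowEdge π q).dens : ℝ) = Fintype.card ι / Fintype.card V := by
    rw [nnratCast_dens, card_rowEdge, Fintype.card_prod, Nat.cast_mul]
    cases isEmpty_or_nonempty ι with
    | inl _ => simp
    | inr _ => field_simp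
  simpa [fixed_edge, resampled_edge, mean_eq] using
    expect_pow_sum_card_transversal_inter_le {p.2} (rowEdge π q) hx

theorem dens_not_card_rowEdge_inter_rowEdge_lt_le (t : ℝ) {x : ℝ} (hx : 1 ≤ x) :
    (dens {π : ρ → ι → Equiv.Perm V |
        ¬∀ p q, p.1 ≠ q.1 → (#(rowEdge π p ∩ rowEdge π q) : ℝ) < t} : ℝ)
      ≤ (Fintype.card ρ * Fintype.card V) ^ 2
        * (Real.exp ((x - 1) * (Fintype.card ι / Fintype.card V)) * x ^ (-t)) := by
  have hx0 : 0 < x := one_pos.trans_le hx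
  set pairs : Finset ((ρ × V) × (ρ × V)) := {pq | pq.1.1 ≠ pq.2.1}
  calc _ ≤ ∑ pq ∈ pairs, 𝔼 π : ρ → ι → Equiv.Perm V,
          x ^ #(rowEdge π pq.1 ∩ rowEdge π pq.2) * x ^ (-t) := by
        refine dens_le_sum_expect (fun _ _ => by positivity) fun π hπ => ?_
        simp only [not_forall, not_lt, mem_filter_univ] at hπ
        obtain ⟨p, q, hpq, ht⟩ := hπ
        refine ⟨(p, q), mem_filter.2 ⟨mem_univ _, hpq⟩, ?_⟩
        rw [← Real.rpow_natCast, ← Real.rpow_add hx0]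
        exact Real.one_le_rpow hx (by linarith)
    _ ≤ #pairs * (Real.exp ((x - 1) * (Fintype.card ι / Fintype.card V)) * x ^ (-t)) := by
        rw [← nsmul_eq_mul]
        refine sum_le_card_nsmul _ _ _ fun pq hpq => ?_
        rw [← expect_mul]
        gcongr
        exact expect_pow_card_rowEdge_inter_rowEdge_le (mem_filter.1 hpq).2 hx
    _ ≤ _ := by
        gcongr
        exact mod_cast (card_le_univ pairs).trans_eq (by simp only [Fintype.card_prod, sq])

end RowEdge

section Mixing

variable {P W : Type*} [Fintype P] [Fintype W] [DecidableEq W]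

/-- One-sided discrepancy bound for a family `e` of `s`-subsets of `W`: every subfamily `F` and
every `B` have at most as many incidences as expected, up to the fraction `δ` of all `s * |P|`
incidences of the family. The lower bound is the same inequality for the complement of `B`. -/
def IsMixing (δ : ℝ) (s : ℕ) (e : P → Finset W) : Prop :=
  ∀ (F : Finset P) (B : Finset W),
    ((∑ p ∈ F, #(e p ∩ B) : ℕ) : ℝ) ≤ #F * (s * B.dens) + δ * s * Fintype.card P

variable {δ : ℝ} {s : ℕ} {e : P → Finset W}

theorem IsMixing.mul_card_filter_lt_le (he : IsMixing δ s e) (hs : 0 < s) (B : Finset W) (η : ℝ) :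
    η * #{p | η * s < #(e p ∩ B) - s * B.dens} ≤ δ * Fintype.card P := by
  set F : Finset P := {p | η * s < #(e p ∩ B) - s * B.dens}
  have lower : (#F : ℝ) * (s * B.dens + η * s) ≤ (∑ p ∈ F, #(e p ∩ B) : ℕ) := by
    rw [← nsmul_eq_mul, Nat.cast_sum]
    refine card_nsmul_le_sum _ _ _ fun p hp => ?_
    linarith [(mem_filter.1 hp).2]
  refine le_of_mul_le_mul_right ?_ (Nat.cast_pos (α := ℝ).2 hs)
  linarith [he F B]

theorem card_inter_compl_sub_card_mul_dens_compl (t B : Finset W) :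
    (#(t ∩ Bᶜ) : ℝ) - #t * Bᶜ.dens = -(#(t ∩ B) - #t * B.dens) := by
  obtain rfl | ⟨w, -⟩ := t.eq_empty_or_nonempty
  · simp
  have : Nonempty W := ⟨w⟩
  have dens_add : (B.dens : ℝ) + Bᶜ.dens = 1 := by
    exact_mod_cast (dens_union_of_disjoint disjoint_compl_right).symm.trans
      (by rw [union_compl, dens_univ])
  have card_add : (#(t ∩ B) : ℝ) + #(t ∩ Bᶜ) = #t := by
    rw [← sdiff_eq_inter_compl]
    exact mod_cast card_inter_add_card_sdiff t B
  linear_combination card_add - #t * dens_add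

theorem IsMixing.mul_card_filter_lt_abs_le (he : IsMixing δ s e) (hcard : ∀ p, #(e p) = s)
    (hs : 0 < s) (B : Finset W) {η : ℝ} (hη : 0 ≤ η) :
    η * #{p | η * s < |(#(e p ∩ B) : ℝ) - s * B.dens|} ≤ 2 * δ * Fintype.card P := by
  have hle : #{p | η * s < |(#(e p ∩ B) : ℝ) - s * B.dens|}
      ≤ #{p | η * s < #(e p ∩ B) - s * B.dens} + #{p | η * s < #(e p ∩ Bᶜ) - s * (Bᶜ).dens} := by
    have neg_eq (p : P) := card_inter_compl_sub_card_mul_dens_compl (e p) B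
    simp only [hcard] at neg_eq
    simp only [neg_eq, lt_abs, filter_or]
    exact card_union_le _ _
  calc η * #{p | η * s < |(#(e p ∩ B) : ℝ) - s * B.dens|}
      ≤ η * #{p | η * s < #(e p ∩ B) - s * B.dens}
          + η * #{p | η * s < #(e p ∩ Bᶜ) - s * (Bᶜ).dens} := by
        rw [← mul_add]
        exact mul_le_mul_of_nonneg_left (mod_cast hle) hη
    _ ≤ δ * Fintype.card P + δ * Fintype.card P :=
        add_le_add (he.mul_card_filter_lt_le hs B η) (he.mul_card_filter_lt_le hs Bᶜ η)
    _ = 2 * δ * Fintype.card P := by ring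

theorem expect_exp_mul_sub_le {Ω : Type*} [Fintype Ω] {X : Ω → ℕ} {l μ M : ℝ} (hl0 : 0 ≤ l)
    (hl1 : l ≤ 1) (hμ : 0 ≤ μ) (hμM : μ ≤ M)
    (hX : 𝔼 ω, Real.exp l ^ X ω ≤ Real.exp ((Real.exp l - 1) * μ)) :
    𝔼 ω, Real.exp (l * (X ω - (μ + 2 * l * M))) ≤ Real.exp (-(l ^ 2 * M)) := by
  have exp_sub_one_le : Real.exp l - 1 ≤ l + l ^ 2 := by
    have := Real.abs_exp_sub_one_sub_id_le ((abs_of_nonneg hl0).trans_le hl1)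
    linarith [(abs_le.1 this).2]
  calc 𝔼 ω, Real.exp (l * (X ω - (μ + 2 * l * M)))
      = (𝔼 ω, Real.exp l ^ X ω) * Real.exp (-(l * (μ + 2 * l * M))) := by
        rw [expect_mul]
        refine expect_congr rfl fun ω _ => ?_
        rw [← Real.exp_nat_mul, ← Real.exp_add]
        ring_nf
    _ ≤ Real.exp ((l + l ^ 2) * μ) * Real.exp (-(l * (μ + 2 * l * M))) := by
        gcongr
        exact hX.trans (by gcongr)
    _ ≤ Real.exp (-(l ^ 2 * M)) := by
        rw [← Real.exp_add, Real.exp_le_exp]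
        linear_combination l ^ 2 * hμM

theorem dens_not_isMixing_le {Ω : Type*} [Fintype Ω] {e : Ω → P → Finset W} (hδ : 0 ≤ δ)
    (hδ2 : δ ≤ 2)
    (hmgf : ∀ (F : Finset P) (B : Finset W) (x : ℝ), 1 ≤ x →
      𝔼 ω, x ^ ∑ p ∈ F, #(e ω p ∩ B) ≤ Real.exp ((x - 1) * (#F * (s * B.dens)))) :
    (dens {ω | ¬IsMixing δ s (e ω)} : ℝ) ≤
      Real.exp (Fintype.card P + Fintype.card W - δ ^ 2 / 4 * s * Fintype.card P) := by
  have hl0 : 0 ≤ δ / 2 := by linarith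
  set excess : Finset P × Finset W → Ω → ℝ := fun q ω =>
    (∑ p ∈ q.1, #(e ω p ∩ q.2) : ℕ) - (#q.1 * (s * q.2.dens) + δ * s * Fintype.card P)
  have expect_exp_le (q : Finset P × Finset W) :
      𝔼 ω, Real.exp (δ / 2 * excess q ω) ≤ Real.exp (-(δ ^ 2 / 4 * s * Fintype.card P)) := by
    have mean_le : (#q.1 * (s * q.2.dens) : ℝ) ≤ s * Fintype.card P := by
      have hF : (#q.1 : ℝ) ≤ Fintype.card P := mod_cast card_le_univ q.1
      have hB : (q.2.dens : ℝ) ≤ 1 := mod_cast q.2.dens_le_one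
      calc (#q.1 * (s * q.2.dens) : ℝ) ≤ Fintype.card P * (s * 1) := by gcongr
        _ = s * Fintype.card P := by ring
    have chernoff := expect_exp_mul_sub_le hl0 (by linarith) (by positivity) mean_le
      (hmgf q.1 q.2 _ (Real.one_le_exp hl0))
    rw [mul_div_cancel₀ δ two_ne_zero, ← mul_assoc δ] at chernoff
    exact chernoff.trans_eq (by ring_nf)
  have card_pairs : (Fintype.card (Finset P × Finset W) : ℝ)
      ≤ Real.exp (Fintype.card P + Fintype.card W) := by
    rw [Fintype.card_prod, Fintype.card_finset, Fintype.card_finset, ← pow_add, Nat.cast_pow,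
      ← Nat.cast_add, ← Real.exp_one_pow]
    exact pow_le_pow_left₀ (by norm_num) (mod_cast Real.exp_one_gt_two.le) _
  calc (dens {ω | ¬IsMixing δ s (e ω)} : ℝ) ≤ ∑ q, 𝔼 ω, Real.exp (δ / 2 * excess q ω) := by
        refine dens_le_sum_expect (fun _ _ => (Real.exp_pos _).le) fun ω hω => ?_
        simp only [IsMixing, not_forall, not_le, mem_filter_univ] at hω
        obtain ⟨F, B, hFB⟩ := hω
        exact ⟨(F, B), mem_univ _, Real.one_le_exp (mul_nonneg hl0 (sub_nonneg.2 hFB.le))⟩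
    _ ≤ Fintype.card (Finset P × Finset W) * Real.exp (-(δ ^ 2 / 4 * s * Fintype.card P)) := by
        rw [← nsmul_eq_mul]
        exact sum_le_card_nsmul _ _ _ fun q _ => expect_exp_le q
    _ ≤ _ := by
        rw [sub_eq_add_neg, Real.exp_add]
        gcongr

end Mixing

section Transfer

variable {α β : Type*} [DecidableEq β]

theorem abs_dens_preimage_sub_dens_le [Fintype α] [Fintype β] (φ : α ↪ β)
    (A : Finset β) :
    |(dens {a | φ a ∈ A} : ℝ) - A.dens| ≤ 1 - Fintype.card α / Fintype.card β := by
  cases isEmpty_or_nonempty α with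
  | inl _ => simp [abs_of_nonneg (NNRat.cast_nonneg (α := ℝ) A.dens)]
  | inr _ =>
  have card_preimage_le : #{a | φ a ∈ A} ≤ #A :=
    card_le_card_of_injOn φ (by simp [Set.MapsTo]) φ.injective.injOn
  have card_preimage_compl_le : #{a | ¬φ a ∈ A} ≤ #Aᶜ :=
    card_le_card_of_injOn φ (by simp [Set.MapsTo]) φ.injective.injOn
  have hsum := card_filter_add_card_filter_not (s := univ) fun a => φ a ∈ A
  rw [card_univ] at hsum
  have hcompl := card_add_card_compl A
  have card_le : #A + Fintype.card α ≤ Fintype.card β + #{a | φ a ∈ A} := by omega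
  have hα : (0 : ℝ) < Fintype.card α := mod_cast Fintype.card_pos
  have hαβ : (Fintype.card α : ℝ) ≤ Fintype.card β := mod_cast Fintype.card_le_of_embedding φ
  have hβ := hα.trans_le hαβ
  rw [nnratCast_dens, nnratCast_dens]
  have hka : (#{a | φ a ∈ A} : ℝ) ≤ #A := mod_cast card_preimage_le
  have hkm : (#{a | φ a ∈ A} : ℝ) ≤ Fintype.card α := mod_cast card_le_univ _
  have ham : (#A + Fintype.card α : ℝ) ≤ Fintype.card β + #{a | φ a ∈ A} := mod_cast card_le
  set a : ℝ := (#A : ℝ)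
  set m : ℝ := (Fintype.card α : ℝ)
  set n : ℝ := (Fintype.card β : ℝ)
  set k : ℝ := (#{a | φ a ∈ A} : ℝ)
  rw [abs_sub_le_iff]
  constructor
  · calc k / m - a / n ≤ k / m - k / n := by gcongr
      _ = k / m * (1 - m / n) := by field_simp
      _ ≤ 1 - m / n :=
        mul_le_of_le_one_left (sub_nonneg.2 (div_le_one_of_le₀ hαβ hβ.le)) ((div_le_one hα).2 hkm)
  · calc a / n - k / m ≤ a / n - k / n := by gcongr
      _ = (a - k) / n := (sub_div _ _ _).symm
      _ ≤ (n - m) / n := div_le_div_of_nonneg_right (by linarith) hβ.le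
      _ = 1 - m / n := by rw [sub_div, div_self hβ.ne']

theorem card_filter_mem_image_map_le [DecidableEq α] {P : Type*} [Fintype P] (e : P → Finset α)
    (φ : α ↪ β) {d : ℕ} (hd : ∀ a, #{p | a ∈ e p} ≤ d) (b : β) :
    #{t ∈ univ.image fun p => (e p).map φ | b ∈ t} ≤ d := by
  rw [filter_image]
  refine card_image_le.trans ?_
  by_cases hb : ∃ a, φ a = b
  · obtain ⟨a, rfl⟩ := hb
    simpa only [mem_map' φ] using hd a
  · have : ∀ p, b ∉ (e p).map φ := fun p hp => hb ((mem_map.1 hp).imp fun _ h => h.2)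
    simp [this]

theorem card_map_inter [Fintype α] [DecidableEq α] (φ : α ↪ β) (t : Finset α) (A : Finset β) :
    #(t.map φ ∩ A) = #(t ∩ ({a | φ a ∈ A} : Finset α)) := by
  rw [← filter_mem_eq_inter, filter_map, card_map, ← filter_mem_eq_inter]
  simp only [mem_filter_univ, Function.comp_def]

theorem IsMixing.mul_card_filter_image_map_le [Fintype α] [DecidableEq α] [Fintype β]
    {P : Type*} [Fintype P] {δ : ℝ} {s : ℕ} {e : P → Finset α} (he : IsMixing δ s e)
    (hcard : ∀ p, #(e p) = s) (hs : 0 < s) (φ : α ↪ β) (A : Finset β) {η γ : ℝ} (hη : 0 ≤ η)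
    (hγ : 1 - (Fintype.card α : ℝ) / Fintype.card β ≤ γ - η) :
    η * #{t ∈ univ.image fun p => (e p).map φ | γ * s < |(#(t ∩ A) : ℝ) - A.dens * s|}
      ≤ 2 * δ * Fintype.card P := by
  set B : Finset α := {a | φ a ∈ A}
  have hclose : |s * (B.dens : ℝ) - A.dens * s| ≤ (1 - Fintype.card α / Fintype.card β) * s := by
    rw [mul_comm, ← sub_mul, abs_mul, Nat.abs_cast]
    gcongr
    exact abs_dens_preimage_sub_dens_le φ A
  have hγs := mul_le_mul_of_nonneg_right hγ (Nat.cast_nonneg (α := ℝ) s)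
  refine le_trans ?_ (he.mul_card_filter_lt_abs_le hcard hs B hη)
  rw [filter_image]
  gcongr
  refine card_image_le.trans (card_le_card fun p hp => ?_)
  simp only [mem_filter_univ, card_map_inter] at hp ⊢
  linarith [abs_sub_le (#(e p ∩ B) : ℝ) (s * B.dens) (A.dens * s)]

theorem injective_of_card_inter_lt [DecidableEq α] {P : Type*} {s : ℕ} {e : P → Finset α}
    (hcard : ∀ p, #(e p) = s) (hinter : ∀ p q, p ≠ q → #(e p ∩ e q) < s) :
    Function.Injective e := by
  intro p q hpq
  by_contra hne
  simpa [hpq, hcard] using hinter p q hne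

theorem IsMixing.exists_uniform_hypergraph [Fintype α] [DecidableEq α] [Fintype β] {P : Type*}
    [Fintype P] [Nonempty P] {δ η κ γ : ℝ} {s d : ℕ} {e : P → Finset α} (he : IsMixing δ s e)
    (hcard : ∀ p, #(e p) = s) (hs : 0 < s) (hdeg : ∀ a, #{p | a ∈ e p} ≤ d)
    (hinter : ∀ p q, p ≠ q → (#(e p ∩ e q) : ℝ) < η * s) (hη : η ≤ 1) (φ : α ↪ β) (hκ : 0 < κ)
    (hγ : 1 - (Fintype.card α : ℝ) / Fintype.card β ≤ γ - κ) (hδ : 2 * δ ≤ κ * γ) :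
    ∃ T : Finset (Finset β), T.Nonempty ∧ (∀ t ∈ T, #t = s) ∧ (∀ v, #{t ∈ T | v ∈ t} ≤ d) ∧
      (∀ t ∈ T, ∀ t' ∈ T, t ≠ t' → (#(t ∩ t') : ℝ) < η * s) ∧
      ∀ A : Finset β, (#{t ∈ T | γ * s < |(#(t ∩ A) : ℝ) - A.dens * s|} : ℝ) ≤ γ * #T := by
  have hinj : Function.Injective fun p => (e p).map φ :=
    (map_injective φ).comp <| injective_of_card_inter_lt hcard fun p q hpq => by
      exact_mod_cast (hinter p q hpq).trans_le (mul_le_of_le_one_left s.cast_nonneg hη)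
  refine ⟨univ.image fun p => (e p).map φ, univ_nonempty.image _, ?_,
    card_filter_mem_image_map_le e φ hdeg, ?_, fun A => ?_⟩
  · simp only [forall_mem_image, card_map, hcard, implies_true]
  · simp only [forall_mem_image, ← map_inter, card_map]
    exact fun p _ q _ hpq => hinter p q fun h => hpq (h ▸ rfl)
  · rw [card_image_of_injective _ hinj, card_univ]
    refine le_of_mul_le_mul_left ?_ hκ
    calc _ ≤ 2 * δ * Fintype.card P := he.mul_card_filter_image_map_le hcard hs φ A hκ.le hγ
      _ ≤ κ * γ * Fintype.card P := by gcongr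
      _ = κ * (γ * Fintype.card P) := mul_assoc _ _ _

end Transfer

section Existence

theorem sq_mul_exp_mul_rpow_neg_le {d N s η : ℝ} (hd : 0 ≤ d) (hη : 0 < η)
    (hN : Real.exp (2 / η) ≤ N) (hdN : 2 * d ≤ N) (hs : 8 / η ≤ s) :
    (d * N) ^ 2 * (Real.exp s * N ^ (-(η * s))) ≤ 1 / 4 := by
  have hN0 : 0 < N := (Real.exp_pos _).trans_le hN
  have hlog : 2 / η ≤ Real.log N := (Real.le_log_iff_exp_le hN0).2 hN
  rw [div_le_iff₀ hη] at hlog hs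
  have decay : Real.exp s * N ^ (-(η * s)) ≤ (N ^ 4)⁻¹ := by
    rw [Real.rpow_def_of_pos hN0, ← Real.exp_add, ← Real.exp_log (inv_pos.2 (pow_pos hN0 4)),
      Real.exp_le_exp, Real.log_inv, Real.log_pow]
    push_cast
    nlinarith
  calc (d * N) ^ 2 * (Real.exp s * N ^ (-(η * s))) ≤ (d * N) ^ 2 * (N ^ 4)⁻¹ := by gcongr
    _ = (d / N) ^ 2 := by field_simp
    _ ≤ (1 / 2) ^ 2 := by
        have : d / N ≤ 1 / 2 := (div_le_div_iff₀ hN0 two_pos).2 (by linarith)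
        gcongr
    _ = 1 / 4 := by norm_num

variable {ρ ι V : Type*} [Fintype ρ] [Fintype ι] [Fintype V] [DecidableEq ι]
  [DecidableEq V]

theorem dens_not_card_rowEdge_inter_rowEdge_lt_le_quarter [DecidableEq ρ] {η : ℝ} (hη : 0 < η)
    (hι : 8 / η ≤ Fintype.card ι) (hV : Real.exp (2 / η) ≤ Fintype.card V)
    (hρV : 2 * (Fintype.card ρ : ℝ) ≤ Fintype.card V) :
    (dens {π : ρ → ι → Equiv.Perm V |
        ¬∀ p q, p.1 ≠ q.1 → (#(rowEdge π p ∩ rowEdge π q) : ℝ) < η * Fintype.card ι} : ℝ)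
      ≤ 1 / 4 := by
  have hV1 : (1 : ℝ) ≤ Fintype.card V := (Real.one_le_exp (by positivity)).trans hV
  refine (dens_not_card_rowEdge_inter_rowEdge_lt_le _ hV1).trans ?_
  refine le_trans ?_ (sq_mul_exp_mul_rpow_neg_le (Nat.cast_nonneg _) hη hV hρV hι)
  gcongr
  rw [mul_div_left_comm]
  exact mul_le_of_le_one_right (Nat.cast_nonneg _)
    (div_le_one_of_le₀ (sub_le_self _ zero_le_one) (Nat.cast_nonneg _))

theorem dens_not_isMixing_rowEdge_le [DecidableEq ρ] {δ : ℝ} (hδ : 0 ≤ δ) (hδ2 : δ ≤ 2)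
    (hρ : 16 ≤ δ ^ 2 * Fintype.card ρ) (hι : 16 ≤ δ ^ 2 * Fintype.card ι) :
    (dens {π : ρ → ι → Equiv.Perm V | ¬IsMixing δ (Fintype.card ι) (rowEdge π)} : ℝ)
      ≤ Real.exp (-((Fintype.card ρ + Fintype.card ι) * Fintype.card V)) := by
  have hρ' := mul_le_mul_of_nonneg_right hρ
    (by positivity : 0 ≤ (Fintype.card ι * Fintype.card V : ℝ))
  have hι' := mul_le_mul_of_nonneg_right hι
    (by positivity : 0 ≤ (Fintype.card ρ * Fintype.card V : ℝ))
  calc (dens {π : ρ → ι → Equiv.Perm V | ¬IsMixing δ (Fintype.card ι) (rowEdge π)} : ℝ)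
      ≤ Real.exp (Fintype.card (ρ × V) + Fintype.card (ι × V)
          - δ ^ 2 / 4 * Fintype.card ι * Fintype.card (ρ × V)) :=
        dens_not_isMixing_le hδ hδ2 fun F B x hx => expect_pow_sum_card_rowEdge_inter_le F B hx
    _ ≤ Real.exp (-((Fintype.card ρ + Fintype.card ι) * Fintype.card V)) := by
        rw [Real.exp_le_exp]
        simp only [Fintype.card_prod, Nat.cast_mul]
        linarith

theorem exists_isMixing_rowEdge [Nonempty ρ] {δ η : ℝ}
    (hδ : 0 ≤ δ) (hδ2 : δ ≤ 2) (hη : 0 < η) (hρ : 16 ≤ δ ^ 2 * Fintype.card ρ)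
    (hι : 16 ≤ δ ^ 2 * Fintype.card ι) (hηι : 8 / η ≤ Fintype.card ι)
    (hηV : Real.exp (2 / η) ≤ Fintype.card V)
    (hρV : 2 * (Fintype.card ρ : ℝ) ≤ Fintype.card V) :
    ∃ π : ρ → ι → Equiv.Perm V,
      (∀ p q, p ≠ q → (#(rowEdge π p ∩ rowEdge π q) : ℝ) < η * Fintype.card ι) ∧
        IsMixing δ (Fintype.card ι) (rowEdge π) := by
  have overlap_le := dens_not_card_rowEdge_inter_rowEdge_lt_le_quarter (ρ := ρ) hη hηι hηV hρV
  have not_mixing_le := dens_not_isMixing_rowEdge_le (V := V) hδ hδ2 hρ hι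
  have exp_lt : Real.exp (-((Fintype.card ρ + Fintype.card ι) * Fintype.card V)) < 1 / 2 := by
    have one_le : 1 ≤ (Fintype.card ρ + Fintype.card ι : ℝ) * Fintype.card V :=
      one_le_mul_of_one_le_of_one_le (mod_cast Fintype.card_pos.trans_le (Nat.le_add_right _ _))
        ((Real.one_le_exp (by positivity)).trans hηV)
    rw [Real.exp_neg, one_div]
    exact inv_strictAnti₀ two_pos (Real.exp_one_gt_two.trans_le (Real.exp_le_exp.2 one_le))
  obtain ⟨π, hoverlap, hmix⟩ :=
    exists_and_of_dens_not_add_dens_not_lt_one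
      ((add_le_add overlap_le not_mixing_le).trans_lt (by linarith))
  refine ⟨π, ?_, hmix⟩
  rintro ⟨r, j⟩ ⟨r', j'⟩ hpq
  obtain rfl | hr := eq_or_ne r r'
  · have hj : j ≠ j' := fun h => hpq (h ▸ rfl)
    have hι0 : 0 < (Fintype.card ι : ℝ) := (by positivity : 0 < 8 / η).trans_le hηι
    rw [disjoint_iff_inter_eq_empty.1 (disjoint_rowEdge π r hj), card_empty, Nat.cast_zero]
    positivity
  · exact hoverlap _ _ hr

theorem exists_isMixing_family {δ η : ℝ} (hδ : 0 < δ) (hδ2 : δ ≤ 2) (hη : 0 < η) :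
    ∃ d C : ℕ, 0 < d ∧ d ≤ C ∧ ∀ s N : ℕ, C ≤ s → C ≤ N →
      ∃ e : Fin d × Fin N → Finset (Fin s × Fin N), (∀ p, #(e p) = s) ∧
        (∀ w, #{p | w ∈ e p} = d) ∧ (∀ p q, p ≠ q → (#(e p ∩ e q) : ℝ) < η * s) ∧
          IsMixing δ s e := by
  obtain ⟨d, hd⟩ := exists_nat_ge (16 / δ ^ 2)
  obtain ⟨C, hC⟩ := exists_nat_ge (max (2 * d : ℝ) (max (8 / η) (Real.exp (2 / η))))
  simp only [max_le_iff] at hC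
  obtain ⟨hdC, hηC, hexpC⟩ := hC
  have hd0 : (0 : ℝ) < d := (by positivity : 0 < 16 / δ ^ 2).trans_le hd
  have hdC' : d ≤ C := by exact_mod_cast (by linarith : (d : ℝ) ≤ C)
  rw [div_le_iff₀' (by positivity)] at hd
  refine ⟨d, C, mod_cast hd0, hdC', fun s N hs hN => ?_⟩
  have : Nonempty (Fin d) := Fin.pos_iff_nonempty.1 (mod_cast hd0)
  have hsR : (C : ℝ) ≤ s := mod_cast hs
  have hNR : (C : ℝ) ≤ N := mod_cast hN
  have hds : δ ^ 2 * d ≤ δ ^ 2 * s := by gcongr; exact hdC'.trans hs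
  obtain ⟨π, hinter, hmix⟩ := exists_isMixing_rowEdge (ρ := Fin d) (ι := Fin s) (V := Fin N)
    hδ.le hδ2 hη (by simpa using hd) (by simpa using hd.trans hds) (by simpa using hηC.trans hsR)
    (by simpa using hexpC.trans hNR) (by simpa using hdC.trans hNR)
  simp only [Fintype.card_fin] at hinter hmix
  exact ⟨rowEdge π, fun p => by rw [card_rowEdge, Fintype.card_fin],
    fun w => by rw [card_filter_mem_rowEdge, Fintype.card_fin], hinter, hmix⟩

theorem one_sub_mul_div_div_le {n s : ℕ} (hs : 0 < s) {c : ℝ} (hsn : s ≤ c * n) :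
    1 - (s * (n / s : ℕ) : ℝ) / n ≤ c := by
  have hn : (0 : ℝ) < n := by
    refine Nat.cast_pos.2 (Nat.pos_of_ne_zero ?_)
    rintro rfl
    simp only [Nat.cast_zero, mul_zero, Nat.cast_nonpos] at hsn
    exact hs.ne' hsn
  have hmod : (n : ℝ) ≤ s * (n / s : ℕ) + s := by exact_mod_cast (Nat.lt_mul_div_succ n hs).le
  rw [one_sub_div hn.ne', div_le_iff₀ hn]
  linarith

end Existence

theorem stmt_13_general (ε : ℝ) (hε : 0 < ε) :
    ∃ C : ℝ, 0 < C ∧ ∀ n s : ℕ, C * (s : ℝ) ≤ (n : ℝ) → C ≤ (s : ℝ) →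
      ∃ T : Finset (Finset (Fin n)),
        T.Nonempty ∧
        (∀ e ∈ T, e.card = s) ∧
        (∀ v : Fin n, ((T.filter fun e => v ∈ e).card : ℝ) ≤ C) ∧
        (∀ e ∈ T, ∀ e' ∈ T, e ≠ e' → ((e ∩ e').card : ℝ) < ε * (s : ℝ)) ∧
        ∀ A : Finset (Fin n),
          ((T.filter fun e =>
              ε * (s : ℝ) < |((e ∩ A).card : ℝ) - (A.card : ℝ) / (n : ℝ) * (s : ℝ)|).card : ℝ)
            ≤ ε * (T.card : ℝ) := by
  obtain ⟨d, C₀, hd, hdC, hfamily⟩ := exists_isMixing_family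
    (lt_min one_pos (by positivity) : 0 < min 1 (ε ^ 2 / 4))
    ((min_le_left _ _).trans one_le_two) (lt_min hε one_pos)
  obtain ⟨C, hC⟩ := exists_nat_ge (max (C₀ : ℝ) (2 / ε))
  obtain ⟨hC₀, hεC⟩ := max_le_iff.1 hC
  rw [div_le_iff₀ hε] at hεC
  have hC0 : 0 < C := hd.trans_le (hdC.trans (mod_cast hC₀))
  refine ⟨C, mod_cast hC0, fun n s hn hs => ?_⟩
  have hloss : (s : ℝ) ≤ ε / 2 * n := by nlinarith
  norm_cast at hn hs hC₀
  have hs0 : 0 < s := hC0.trans_le hs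
  have hN : C ≤ n / s := (Nat.le_div_iff_mul_le hs0).2 hn
  obtain ⟨e, hcard, hdeg, hinter, hmix⟩ := hfamily s (n / s) (hC₀.trans hs) (hC₀.trans hN)
  have : Nonempty (Fin d × Fin (n / s)) := ⟨⟨0, hd⟩, ⟨0, hC0.trans_le hN⟩⟩
  obtain ⟨φ⟩ : Nonempty (Fin s × Fin (n / s) ↪ Fin n) :=
    Function.Embedding.nonempty_of_card_le (by simpa using Nat.mul_div_le n s)
  obtain ⟨T, hT, hTcard, hTdeg, hTinter, hTmix⟩ :=
    hmix.exists_uniform_hypergraph hcard hs0 (fun w => (hdeg w).le) hinter (min_le_right _ _) φ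
      (half_pos hε) (γ := ε) (by rw [sub_half]; simpa using one_sub_mul_div_div_le hs0 hloss)
      (by linarith [min_le_right 1 (ε ^ 2 / 4)])
  refine ⟨T, hT, hTcard, fun v => mod_cast (hTdeg v).trans (hdC.trans hC₀), ?_, ?_⟩
  · exact fun t ht t' ht' htt' =>
      (hTinter t ht t' ht' htt').trans_le (by gcongr; exact min_le_left _ _)
  · simpa only [nnratCast_dens, Fintype.card_fin] using hTmix

/-- For any real `ε > 0` there is a constant `C = C(ε)` such that for all integers `n, s`
with `n ≥ C·s²` and `s ≥ C`, there is a nonempty `s`-uniform hypergraph `𝒯` on `n`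
vertices such that: (1) the maximum degree of `𝒯` is at most `C`; (2) `|e ∩ e'| < ε·s`
for all distinct edges `e, e'`; (3) for every `A ⊆ V(𝒯)` with `|A| ≥ ε·n`, at most
`ε·e(𝒯)` edges `e` satisfy `||e ∩ A| − (|A|/n)·s| > ε·s`. -/
theorem stmt_13 (ε : ℝ) (hε : 0 < ε) :
    ∃ C : ℝ, 0 < C ∧ ∀ n s : ℕ, C * (s : ℝ) ^ 2 ≤ (n : ℝ) → C ≤ (s : ℝ) →
      ∃ T : Finset (Finset (Fin n)),
        T.Nonempty ∧
        (∀ e ∈ T, e.card = s) ∧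
        (∀ v : Fin n, ((T.filter fun e => v ∈ e).card : ℝ) ≤ C) ∧
        (∀ e ∈ T, ∀ e' ∈ T, e ≠ e' → ((e ∩ e').card : ℝ) < ε * (s : ℝ)) ∧
        ∀ A : Finset (Fin n), ε * (n : ℝ) ≤ (A.card : ℝ) →
          ((T.filter fun e =>
              ε * (s : ℝ) < |((e ∩ A).card : ℝ) - (A.card : ℝ) / (n : ℝ) * (s : ℝ)|).card : ℝ)
            ≤ ε * (T.card : ℝ) := by
  obtain ⟨C, hC, h⟩ := stmt_13_general ε hε
  refine ⟨C, hC, fun n s hn hs => ?_⟩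
  have le_sq : (s : ℝ) ≤ (s : ℝ) ^ 2 := by exact_mod_cast Nat.le_self_pow two_ne_zero s
  obtain ⟨T, hT, hcard, hdeg, hinter, hmix⟩ :=
    h n s ((mul_le_mul_of_nonneg_left le_sq hC.le).trans hn) hs
  exact ⟨T, hT, hcard, hdeg, hinter, fun A _ => hmix A⟩
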